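/- The backstepping transformation and its inverse transformation are mutually inverse: for every H > 0, every h ∈ ℝ, and every continuous function T̃ : [0,H] → ℝ, if w : [0,H] → ℝ is defined by w(x) := T̃(x) − ∫_x^H r(x,y) T̃(y) dy − φ(x,H) h, then T̃(x) = w(x) − ∫_x^H q(x,y) w(y) dy − ψ(x,H) h for all x ∈ [0,H]. -/

import Mathlib

/-- `Φ_j(x,y) = 2^{-j} ∑_{m=0}^∞ ((λ/(4D))(y² − x²))^m / (m! (m+j)!)`. -/
noncomputable def Phi (D lam : ℝ) (j : ℕ) (x y : ℝ) : ℝ :=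
  (1 / 2 ^ j) *
    ∑' m : ℕ, (lam / (4 * D) * (y ^ 2 - x ^ 2)) ^ m / (m.factorial * (m + j).factorial : ℝ)

/-- `Ψ_j(x,y) = 2^{-j} ∑_{m=0}^∞ (−(λ/(4D))(y² − x²))^m / (m! (m+j)!)`. -/
noncomputable def Psi (D lam : ℝ) (j : ℕ) (x y : ℝ) : ℝ :=
  (1 / 2 ^ j) *
    ∑' m : ℕ, (-(lam / (4 * D)) * (y ^ 2 - x ^ 2)) ^ m / (m.factorial * (m + j).factorial : ℝ)

/-- The direct backstepping kernel `q(x,y) = −(λ/D) x Φ₁(x,y)`. -/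
noncomputable def qker (D lam : ℝ) (x y : ℝ) : ℝ :=
  -(lam / D) * x * Phi D lam 1 x y

/-- The inverse backstepping kernel `r(x,y) = (λ/D) x Ψ₁(x,y)`. -/
noncomputable def rker (D lam : ℝ) (x y : ℝ) : ℝ :=
  lam / D * x * Psi D lam 1 x y

/-- `ψ(x,H) = (D/β) q(x,H)`. -/
noncomputable def psiK (D lam beta : ℝ) (x H : ℝ) : ℝ :=
  D / beta * qker D lam x H

/-- `φ(x,H) = (D/β) r(x,H)`. -/
noncomputable def phiK (D lam beta : ℝ) (x H : ℝ) : ℝ :=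
  D / beta * rker D lam x H

/-! Both kernels belong to the family `k_c(x, y) = 2 c x C₁(c (x² - y²))`, where `C₁` is the
Bessel–Clifford function of order one: `r = k_c` and `q = k_{-c}` for `c = λ / (4 D)`. Exchanging
the order of integration reduces the claim to the resolvent identity
`∫_x^z q(x,y) r(y,z) dy = r(x,z) + q(x,z)`, which at `z = H` also takes care of the boundary term.
The substitution `u = c (y² - x²)` turns it into `∫_0^a C₁(u) C₁(u - a) du = C₁(a) - C₁(-a)`, where
`a` times the integrand has the primitive `u C₁(u) C₀(u - a) - C₀(u) (u - a) C₁(u - a)`, because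
`C₀' = C₁` and `(s C₁)' = C₀`. -/

open MeasureTheory Set
open scoped Nat

section IntegralOverTriangle

variable {E : Type*} [NormedAddCommGroup E] [NormedSpace ℝ E] {f : ℝ → ℝ → E} {g : ℝ → E}
  {a b t : ℝ}

theorem setIntegral_Ioc_indicator_Ioi (ht : t ∈ Icc a b) :
    ∫ s in Ioc a b, (Ioi t).indicator g s = ∫ s in t..b, g s := by
  rw [setIntegral_indicator measurableSet_Ioi, Ioc_inter_Ioi, sup_eq_right.2 ht.1,
    intervalIntegral.integral_of_le ht.2]

theorem setIntegral_Ioc_indicator_Iio (ht : t ∈ Icc a b) :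
    ∫ s in Ioc a b, (Iio t).indicator g s = ∫ s in a..t, g s := by
  have inter_eq : Ioc a b ∩ Iio t = Ioo a t := by
    ext s
    exact ⟨fun hs => ⟨hs.1.1, hs.2⟩, fun hs => ⟨⟨hs.1, hs.2.le.trans ht.2⟩, hs.2⟩⟩
  rw [setIntegral_indicator measurableSet_Iio, inter_eq, ← integral_Ioc_eq_integral_Ioo,
    intervalIntegral.integral_of_le ht.1]

theorem intervalIntegrable_integral_right
    (hf : IntegrableOn (Function.uncurry f) (Ioc a b ×ˢ Ioc a b)) (hab : a ≤ b) :
    IntervalIntegrable (fun s => ∫ t in s..b, f s t) volume a b := by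
  rw [IntegrableOn, Measure.volume_eq_prod, ← Measure.prod_restrict] at hf
  rw [intervalIntegrable_iff_integrableOn_Ioc_of_le hab]
  refine IntegrableOn.congr_fun
    (hf.indicator (measurableSet_lt measurable_fst measurable_snd)).integral_prod_left
    (fun s hs => ?_) measurableSet_Ioc
  exact setIntegral_Ioc_indicator_Ioi (Ioc_subset_Icc_self hs)

theorem intervalIntegral_integral_swap_triangle
    (hf : IntegrableOn (Function.uncurry f) (Ioc a b ×ˢ Ioc a b)) (hab : a ≤ b) :
    ∫ s in a..b, ∫ t in s..b, f s t = ∫ t in a..b, ∫ s in a..t, f s t := by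
  rw [IntegrableOn, Measure.volume_eq_prod, ← Measure.prod_restrict] at hf
  have hswap : ∫ s in Ioc a b, ∫ t in Ioc a b, (Ioi s).indicator (f s) t =
      ∫ t in Ioc a b, ∫ s in Ioc a b, (Iio t).indicator (fun s => f s t) s :=
    integral_integral_swap (hf.indicator (measurableSet_lt measurable_fst measurable_snd))
  rw [intervalIntegral.integral_of_le hab, intervalIntegral.integral_of_le hab]
  calc ∫ s in Ioc a b, ∫ t in s..b, f s t
      = ∫ s in Ioc a b, ∫ t in Ioc a b, (Ioi s).indicator (f s) t :=
        setIntegral_congr_fun measurableSet_Ioc fun _ hs =>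
          (setIntegral_Ioc_indicator_Ioi (Ioc_subset_Icc_self hs)).symm
    _ = ∫ t in Ioc a b, ∫ s in Ioc a b, (Iio t).indicator (fun s => f s t) s := hswap
    _ = ∫ t in Ioc a b, ∫ s in a..t, f s t :=
        setIntegral_congr_fun measurableSet_Ioc fun _ ht =>
          setIntegral_Ioc_indicator_Iio (Ioc_subset_Icc_self ht)

end IntegralOverTriangle

section Volterra

variable {E : Type*} [NormedAddCommGroup E] [NormedSpace ℝ E] {k : ℝ → ℝ → ℝ}
  {q r : ℝ → ℝ → ℝ} {x H : ℝ} {T w : ℝ → E} {g : E}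

theorem integrableOn_prod_kernel_smul {a b : ℝ} (hk : Continuous (Function.uncurry k))
    (hT : IntervalIntegrable T volume a b) (hab : a ≤ b) :
    IntegrableOn (Function.uncurry fun s t => k s t • T t) (Ioc a b ×ˢ Ioc a b) := by
  refine IntegrableOn.continuousOn_smul_of_subset (K := Icc a b ×ˢ Icc a b) hk.continuousOn ?_
    (isCompact_Icc.prod isCompact_Icc) (measurableSet_Ioc.prod measurableSet_Ioc)
    (prod_mono Ioc_subset_Icc_self Ioc_subset_Icc_self)
  rw [IntegrableOn, Measure.volume_eq_prod, ← Measure.prod_restrict]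
  exact ((intervalIntegrable_iff_integrableOn_Ioc_of_le hab).1 hT).comp_snd _

theorem integral_kernel_smul_integral_kernel_smul [CompleteSpace E]
    (hq : Continuous (Function.uncurry q)) (hr : Continuous (Function.uncurry r))
    (hT : IntervalIntegrable T volume x H) (hxH : x ≤ H) :
    ∫ y in x..H, q x y • ∫ z in y..H, r y z • T z =
      ∫ z in x..H, (∫ y in x..z, q x y * r y z) • T z := by
  have hk : Continuous (Function.uncurry fun y z => q x y * r y z) := by fun_prop
  simp_rw [← intervalIntegral.integral_smul, smul_smul]
  rw [intervalIntegral_integral_swap_triangle (integrableOn_prod_kernel_smul hk hT hxH) hxH]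
  simp_rw [intervalIntegral.integral_smul_const]

theorem eq_sub_integral_smul_of_resolvent [CompleteSpace E]
    (hq : Continuous (Function.uncurry q)) (hr : Continuous (Function.uncurry r))
    (hxH : x ≤ H) (hqr : ∀ z ∈ Icc x H, ∫ y in x..z, q x y * r y z = r x z + q x z)
    (hT : IntervalIntegrable T volume x H)
    (hw : ∀ y ∈ Icc x H, w y = T y - (∫ z in y..H, r y z • T z) - r y H • g) :
    T x = w x - (∫ y in x..H, q x y • w y) - q x H • g := by
  have hqT : IntervalIntegrable (fun y => q x y • T y) volume x H :=
    hT.continuousOn_smul (by fun_prop)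
  have hrT : IntervalIntegrable (fun y => r x y • T y) volume x H :=
    hT.continuousOn_smul (by fun_prop)
  have hqrT : IntervalIntegrable (fun y => q x y • ∫ z in y..H, r y z • T z) volume x H :=
    (intervalIntegrable_integral_right (integrableOn_prod_kernel_smul hr hT hxH)
      hxH).continuousOn_smul (by fun_prop)
  have hqrg : IntervalIntegrable (fun y => (q x y * r y H) • g) volume x H :=
    Continuous.intervalIntegrable (by fun_prop) _ _
  have hcomp : ∫ y in x..H, q x y • ∫ z in y..H, r y z • T z =
      (∫ z in x..H, r x z • T z) + ∫ z in x..H, q x z • T z := by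
    rw [integral_kernel_smul_integral_kernel_smul hq hr hT hxH,
      ← intervalIntegral.integral_add hrT hqT]
    refine intervalIntegral.integral_congr fun z hz => ?_
    simp only [hqr z (uIcc_of_le hxH ▸ hz), add_smul]
  have hqw : ∫ y in x..H, q x y • w y = (∫ y in x..H, q x y • T y) -
      (∫ y in x..H, q x y • ∫ z in y..H, r y z • T z) - (∫ y in x..H, q x y * r y H) • g := by
    rw [← intervalIntegral.integral_smul_const, ← intervalIntegral.integral_sub hqT hqrT,
      ← intervalIntegral.integral_sub (hqT.sub hqrT) hqrg]
    refine intervalIntegral.integral_congr fun y hy => ?_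
    simp only [hw y (uIcc_of_le hxH ▸ hy), smul_sub, smul_smul]
  rw [hqw, hcomp, hqr H (right_mem_Icc.2 hxH), hw x (left_mem_Icc.2 hxH), add_smul]
  abel

end Volterra

/-- The Bessel–Clifford function `C_n(s) = ∑ sᵐ / (m! (m+n)!)`, which is entire and satisfies
`C_n(z² / 4) = 2ⁿ I_n(z) / zⁿ` and `C_n(-z² / 4) = 2ⁿ J_n(z) / zⁿ`. -/
noncomputable def besselClifford (n : ℕ) (s : ℝ) : ℝ :=
  ∑' m : ℕ, s ^ m / (m ! * (m + n)! : ℝ)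

theorem norm_pow_div_factorial_mul_factorial_le {s R : ℝ} (hs : |s| ≤ R) (m n : ℕ) :
    ‖s ^ m / (m ! * n ! : ℝ)‖ ≤ R ^ m / m ! := by
  have hn : (1 : ℝ) ≤ n ! := mod_cast n.factorial_pos
  rw [norm_div, norm_pow, Real.norm_eq_abs, Real.norm_of_nonneg (by positivity)]
  have hR : 0 ≤ R := (abs_nonneg s).trans hs
  gcongr
  exact le_mul_of_one_le_right (by positivity) hn

theorem hasSum_besselClifford (n : ℕ) (s : ℝ) :
    HasSum (fun m : ℕ => s ^ m / (m ! * (m + n)! : ℝ)) (besselClifford n s) :=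
  (Summable.of_norm_bounded (Real.summable_pow_div_factorial |s|) fun m =>
    norm_pow_div_factorial_mul_factorial_le le_rfl m (m + n)).hasSum

theorem besselClifford_zero_right (n : ℕ) : besselClifford n 0 = 1 / n ! := by
  rw [besselClifford, tsum_eq_single 0 fun m hm => by simp [hm]]
  simp

theorem succ_mul_pow_div_factorial_mul_factorial (m n : ℕ) (s : ℝ) :
    ((m + 1 : ℕ) * s ^ m) / ((m + 1)! * (m + 1 + n)! : ℝ) =
      s ^ m / (m ! * (m + (n + 1))! : ℝ) := by
  rw [show m + (n + 1) = m + 1 + n by ring, Nat.factorial_succ m]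
  push_cast
  field_simp

theorem hasDerivAt_besselClifford (n : ℕ) (s : ℝ) :
    HasDerivAt (besselClifford n) (besselClifford (n + 1) s) s := by
  let R := |s| + 1
  let bound : ℕ → ℝ := fun m => R ^ (m - 1) / (m - 1)!
  let derivTerm : ℕ → ℝ → ℝ := fun m t => m * t ^ (m - 1) / (m ! * (m + n)! : ℝ)
  have hbound : Summable bound := (summable_nat_add_iff 1).1 (Real.summable_pow_div_factorial R)
  have hderivTerm : ∀ m, ∀ t ∈ Metric.ball (0 : ℝ) R, ‖derivTerm m t‖ ≤ bound m := by
    rintro (_ | m) t ht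
    · simp [derivTerm, bound]
    · have htR : |t| ≤ R := by simpa using (Metric.mem_ball.1 ht).le
      simpa only [derivTerm, bound, Nat.add_sub_cancel,
        succ_mul_pow_div_factorial_mul_factorial] using
        norm_pow_div_factorial_mul_factorial_le htR m (m + (n + 1))
  have hs : s ∈ Metric.ball (0 : ℝ) R := by simp [R]
  have hderiv : HasDerivAt (besselClifford n) (∑' m, derivTerm m s) s :=
    hasDerivAt_tsum_of_isPreconnected hbound Metric.isOpen_ball (convex_ball _ _).isPreconnected
      (fun m t _ => (hasDerivAt_pow m t).div_const _) hderivTerm hs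
      (hasSum_besselClifford n s).summable hs
  have hsummable : Summable (derivTerm · s) := .of_norm_bounded hbound fun m => hderivTerm m s hs
  refine hderiv.congr_deriv ?_
  rw [hsummable.tsum_eq_zero_add]
  simp only [derivTerm, Nat.cast_zero, zero_mul, zero_div, zero_add, Nat.add_sub_cancel,
    succ_mul_pow_div_factorial_mul_factorial, besselClifford]

@[fun_prop]
theorem continuous_besselClifford (n : ℕ) : Continuous (besselClifford n) :=
  continuous_iff_continuousAt.2 fun s => (hasDerivAt_besselClifford n s).continuousAt

theorem besselClifford_recurrence (n : ℕ) (s : ℝ) :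
    s * besselClifford (n + 2) s + (n + 1) * besselClifford (n + 1) s = besselClifford n s := by
  have hasSum_tail : ∀ k, HasSum (fun m : ℕ => s ^ (m + 1) / ((m + 1)! * (m + 1 + k)! : ℝ))
      (besselClifford k s - 1 / k !) := fun k => by
    simpa using (hasSum_nat_add_iff' 1).2 (hasSum_besselClifford k s)
  have hasSum_lhs := ((hasSum_besselClifford (n + 2) s).mul_left s).add
    ((hasSum_tail (n + 1)).mul_left (n + 1 : ℝ))
  have hterm : ∀ m : ℕ, s * (s ^ m / (m ! * (m + (n + 2))! : ℝ)) +
      (n + 1) * (s ^ (m + 1) / ((m + 1)! * (m + 1 + (n + 1))! : ℝ)) =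
      s ^ (m + 1) / ((m + 1)! * (m + 1 + n)! : ℝ) := fun m => by
    rw [show m + (n + 2) = m + 1 + n + 1 by ring, ← add_assoc (m + 1),
      Nat.factorial_succ (m + 1 + n), Nat.factorial_succ m]
    push_cast
    field_simp
    ring
  have htails := hasSum_lhs.unique ((hasSum_tail n).congr_fun hterm)
  have hconst : ((n : ℝ) + 1) * (1 / (n + 1)!) = 1 / n ! := by
    rw [Nat.factorial_succ]
    push_cast
    field_simp
  linarith

theorem hasDerivAt_mul_besselClifford_one (s : ℝ) :
    HasDerivAt (fun t => t * besselClifford 1 t) (besselClifford 0 s) s := by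
  refine ((hasDerivAt_id' s).mul (hasDerivAt_besselClifford 1 s)).congr_deriv ?_
  have hrec := besselClifford_recurrence 0 s
  norm_num at hrec ⊢
  linarith

theorem integral_besselClifford_one_mul_comp_sub (a : ℝ) :
    ∫ u in 0..a, besselClifford 1 u * besselClifford 1 (u - a) =
      besselClifford 1 a - besselClifford 1 (-a) := by
  rcases eq_or_ne a 0 with rfl | ha
  · simp
  let P : ℝ → ℝ := fun u =>
    u * besselClifford 1 u * besselClifford 0 (u - a) -
      besselClifford 0 u * ((u - a) * besselClifford 1 (u - a))
  have hP : ∀ u, HasDerivAt P (a * (besselClifford 1 u * besselClifford 1 (u - a))) u := fun u => by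
    have h0 := (hasDerivAt_besselClifford 0 (u - a)).comp_sub_const u a
    have h1 := (hasDerivAt_mul_besselClifford_one (u - a)).comp_sub_const u a
    refine (((hasDerivAt_mul_besselClifford_one u).mul h0).sub
      ((hasDerivAt_besselClifford 0 u).mul h1)).congr_deriv ?_
    ring
  have hint : ∫ u in 0..a, a * (besselClifford 1 u * besselClifford 1 (u - a)) = P a - P 0 :=
    intervalIntegral.integral_eq_sub_of_hasDerivAt (fun u _ => hP u)
      (Continuous.intervalIntegrable (by fun_prop) _ _)
  rw [intervalIntegral.integral_const_mul] at hint
  refine mul_left_cancel₀ ha (hint.trans ?_)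
  simp only [P, besselClifford_zero_right, sub_self, zero_sub, Nat.factorial_zero]
  ring

/-- The family containing both backstepping kernels: with `c = λ / (4 D)`, the inverse kernel `r` is
`besselKernel c` and the direct kernel `q` is `besselKernel (-c)`. -/
noncomputable def besselKernel (c x y : ℝ) : ℝ :=
  2 * c * x * besselClifford 1 (c * (x ^ 2 - y ^ 2))

theorem continuous_besselKernel (c : ℝ) : Continuous (Function.uncurry (besselKernel c)) := by
  unfold besselKernel Function.uncurry
  fun_prop

theorem rker_eq_besselKernel (D lam : ℝ) : rker D lam = besselKernel (lam / (4 * D)) := by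
  ext x y
  have harg : -(lam / (4 * D)) * (y ^ 2 - x ^ 2) = lam / (4 * D) * (x ^ 2 - y ^ 2) := by ring
  simp only [rker, Psi, besselKernel, besselClifford, harg]
  ring

theorem qker_eq_besselKernel (D lam : ℝ) : qker D lam = besselKernel (-(lam / (4 * D))) := by
  ext x y
  have harg : lam / (4 * D) * (y ^ 2 - x ^ 2) = -(lam / (4 * D)) * (x ^ 2 - y ^ 2) := by ring
  simp only [qker, Phi, besselKernel, besselClifford, harg]
  ring

theorem integral_besselKernel_neg_mul_besselKernel (c x z : ℝ) :
    ∫ y in x..z, besselKernel (-c) x y * besselKernel c y z =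
      besselKernel c x z + besselKernel (-c) x z := by
  let F : ℝ → ℝ := fun u => besselClifford 1 u * besselClifford 1 (u - c * (z ^ 2 - x ^ 2))
  have hF : Continuous F := by fun_prop
  have hu : ∀ y ∈ uIcc x z, HasDerivAt (fun y => c * (y ^ 2 - x ^ 2)) (2 * c * y) y := fun y _ =>
    (((hasDerivAt_pow 2 y).sub_const _).const_mul c).congr_deriv (by push_cast; ring)
  calc ∫ y in x..z, besselKernel (-c) x y * besselKernel c y z
      = ∫ y in x..z, -2 * c * x * (F (c * (y ^ 2 - x ^ 2)) * (2 * c * y)) := by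
        refine intervalIntegral.integral_congr fun y _ => ?_
        simp only [besselKernel, F]
        ring_nf
    _ = -2 * c * x * ∫ u in c * (x ^ 2 - x ^ 2)..c * (z ^ 2 - x ^ 2), F u := by
        rw [intervalIntegral.integral_const_mul]
        congr 1
        exact intervalIntegral.integral_comp_mul_deriv hu (by fun_prop) hF
    _ = besselKernel c x z + besselKernel (-c) x z := by
        rw [sub_self, mul_zero, integral_besselClifford_one_mul_comp_sub]
        simp only [besselKernel]
        ring_nf

/-- In the backstepping problem `c = λ / (4 D)` and `g = (D / β) h`. As `c` may have either sign,
replacing it by `-c` gives the converse: applying the `-c` transformation first and then the `c`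
transformation is also the identity. -/
theorem backstepping_transformations_inverse_general {E : Type*} [NormedAddCommGroup E]
    [NormedSpace ℝ E] [CompleteSpace E] (c : ℝ) {x H : ℝ} (hxH : x ≤ H) (g : E) {T w : ℝ → E}
    (hT : IntervalIntegrable T volume x H)
    (hw : ∀ y ∈ Icc x H,
      w y = T y - (∫ z in y..H, besselKernel c y z • T z) - besselKernel c y H • g) :
    T x = w x - (∫ y in x..H, besselKernel (-c) x y • w y) - besselKernel (-c) x H • g :=
  eq_sub_integral_smul_of_resolvent (continuous_besselKernel (-c)) (continuous_besselKernel c) hxH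
    (fun z _ => integral_besselKernel_neg_mul_besselKernel c x z) hT hw

/-- The backstepping transformation and its inverse are mutually inverse: if
`w(x) = T̃(x) − ∫_x^H r(x,y) T̃(y) dy − φ(x,H) h`, then
`T̃(x) = w(x) − ∫_x^H q(x,y) w(y) dy − ψ(x,H) h` on `[0,H]`. -/
theorem backstepping_transformations_inverse
    (D lam beta : ℝ) (hD : 0 < D) (hlam : 0 < lam) (hbeta : 0 < beta)
    (H : ℝ) (hH : 0 < H) (h : ℝ) (T : ℝ → ℝ)
    (hT : ContinuousOn T (Set.Icc 0 H))
    (w : ℝ → ℝ)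
    (hw : ∀ x, w x = T x - (∫ y in x..H, rker D lam x y * T y) - phiK D lam beta x H * h) :
    ∀ x ∈ Set.Icc (0 : ℝ) H,
      T x = w x - (∫ y in x..H, qker D lam x y * w y) - psiK D lam beta x H * h := by
  intro x hx
  have hT' : IntervalIntegrable T volume x H :=
    (hT.mono (Icc_subset_Icc_left hx.1)).intervalIntegrable_of_Icc hx.2
  have boundary_term : ∀ k : ℝ, D / beta * k * h = k * (D / beta * h) := fun k => by ring
  simp only [phiK, psiK, rker_eq_besselKernel, qker_eq_besselKernel, boundary_term] at hw ⊢
  exact backstepping_transformations_inverse_general _ hx.2 _ hT' fun y _ => hw y
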